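/- arXiv:2403.14923 — 2 statements merged into one kernel-verified Lean document; each statement's English description precedes it below -/
import Mathlib

section
/- Let x and y be real numbers with x > 6 and 4 < y ≤ x·(2x)^x. Then log(y)/log(log(y)) < x. -/
/-- Lemma 2.6: if `x > 6` and `4 < y ≤ x·(2x)^x`, then `log y / log (log y) < x`.
Here `log` is the natural logarithm and `(2x)^x` is the real power. -/
theorem log_div_log_log_lt (x y : ℝ) (hx : x > 6) (hy : 4 < y)
    (hxy : y ≤ x * (2 * x) ^ x) :
    Real.log y / Real.log (Real.log y) < x := by
  have hx0 : 0 < x := by linarith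
  have e1 := Real.exp_one_lt_d9
  have e2 := Real.exp_one_gt_d9
  have l2 := Real.log_two_gt_d9
  have l2' := Real.log_two_lt_d9
  have he3 : Real.exp 0.3 < 1.36 := by
    have h : Real.exp 0.3 ^ 10 = Real.exp 1 ^ 3 := by
      rw [← Real.exp_nat_mul, ← Real.exp_nat_mul]; norm_num
    refine lt_of_pow_lt_pow_left₀ 10 (by norm_num) ?_
    rw [h]
    calc Real.exp 1 ^ 3 < 2.7182818286 ^ 3 := by gcongr
      _ < _ := by norm_num
  have hl6 : Real.log 6 ≤ 1.8 := by
    rw [Real.log_le_iff_le_exp (by norm_num)]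
    have h : Real.exp 1.8 ^ 5 = Real.exp 1 ^ 9 := by
      rw [← Real.exp_nat_mul, ← Real.exp_nat_mul]; norm_num
    refine le_of_lt (lt_of_pow_lt_pow_left₀ 5 (Real.exp_pos _).le ?_)
    rw [h]
    calc (6:ℝ) ^ 5 < 2.7182818283 ^ 9 := by norm_num
      _ < _ := by gcongr
  have hl12 : 2.45 ≤ Real.log 12 := by
    rw [Real.le_log_iff_exp_le (by norm_num)]
    have h : Real.exp 2.45 ^ 20 = Real.exp 1 ^ 49 := by
      rw [← Real.exp_nat_mul, ← Real.exp_nat_mul]; norm_num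
    refine le_of_lt (lt_of_pow_lt_pow_left₀ 20 (by norm_num) ?_)
    rw [h]
    calc Real.exp 1 ^ 49 < 2.7182818286 ^ 49 := by gcongr
      _ < _ := by norm_num
  have hl4 : Real.log 4 = 2 * Real.log 2 := by
    rw [show (4:ℝ) = 2 ^ 2 by norm_num, Real.log_pow]; norm_num
  have hll4 : 0.3 < Real.log (Real.log 4) := by
    rw [Real.lt_log_iff_exp_lt (by linarith)]; linarith
  obtain ⟨u, hu⟩ : ∃ u, u = Real.log x / x := ⟨_, rfl⟩
  have hux : Real.log x = u * x := by rw [hu]; field_simp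
  have hu3 : u ≤ 0.3 := by
    have := Real.log_div_self_antitoneOn (a := 6) (b := x)
      (by simp only [Set.mem_Ici]; linarith) (by simp only [Set.mem_Ici]; linarith) hx.le
    simp only at this
    rw [hu]; linarith
  have hu0 : 0 ≤ u := by
    rw [hu]; exact div_nonneg (Real.log_nonneg (by linarith)) hx0.le
  have hl2x : Real.log (2 * x) = Real.log 2 + Real.log x :=
    Real.log_mul (by norm_num) hx0.ne'
  have hl2x' : Real.log 12 ≤ Real.log (2 * x) :=
    Real.log_le_log (by norm_num) (by linarith)
  have hkey : 2 * Real.exp u < Real.log (2 * x) + u := by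
    have h1 : Real.exp u * Real.exp (0.3 - u) = Real.exp 0.3 := by
      rw [← Real.exp_add]; congr 1; ring
    have h2 := Real.add_one_le_exp (0.3 - u)
    have h3 := Real.one_le_exp hu0
    nlinarith
  obtain ⟨M, hM⟩ : ∃ M, M = x * (Real.log (2 * x) + u) := ⟨_, rfl⟩
  have hM0 : 0 < M := by rw [hM]; exact mul_pos hx0 (by linarith)
  have hMlog : M < x * Real.log M := by
    have h : Real.log (2 * x) + u < Real.log M := by
      rw [Real.lt_log_iff_exp_lt hM0, hl2x, Real.exp_add, Real.exp_add,
        Real.exp_log (by norm_num), Real.exp_log hx0, hM]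
      nlinarith
    calc M = x * (Real.log (2 * x) + u) := hM
      _ < _ := by gcongr
  have htM : Real.log y ≤ M := by
    have h := Real.log_le_log (by linarith) hxy
    rw [Real.log_mul hx0.ne' (by positivity), Real.log_rpow (by linarith)] at h
    rw [hM]; linarith
  have ht4 : Real.log 4 < Real.log y := Real.log_lt_log (by norm_num) hy
  have hconc : ConcaveOn ℝ (Set.Ioi 0) (fun t => x • Real.log t - id t) :=
    (strictConcaveOn_log_Ioi.concaveOn.smul hx0.le).sub (convexOn_id (convex_Ioi 0))
  have hmin := hconc.min_le_of_mem_Icc (x := Real.log 4) (y := M) (z := Real.log y)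
    (by simp only [Set.mem_Ioi]; linarith) hM0 ⟨ht4.le, htM⟩
  simp only [smul_eq_mul, id] at hmin
  have hpos : 0 < min (x * Real.log (Real.log 4) - Real.log 4) (x * Real.log M - M) :=
    lt_min (by nlinarith) (by linarith)
  have hll : 0 < Real.log (Real.log y) := Real.log_pos (by linarith)
  rw [div_lt_iff₀ hll]
  linarith
end

section
/- For every real number x > 6 one has log(x) + x·log(2x) ≤ x·log(log(x) + x·log(2x)). -/
/-- Key inequality in the proof of Lemma 2.6: for every `x > 6`,
`log x + x·log(2x) ≤ x·log(log x + x·log(2x))`. -/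
theorem key_log_inequality (x : ℝ) (hx : x > 6) :
    Real.log x + x * Real.log (2 * x) ≤
      x * Real.log (Real.log x + x * Real.log (2 * x)) := by
  have hx0 : 0 < x := by linarith
  have h2 := Real.log_two_gt_d9
  have h2' := Real.log_two_lt_d9
  have h3a : 5 * Real.log 3 ≤ 8 * Real.log 2 := by
    have := Real.log_le_log (x := (3:ℝ)^5) (y := (2:ℝ)^8) (by norm_num) (by norm_num)
    rw [Real.log_pow, Real.log_pow] at this
    exact_mod_cast this
  have h3b : 3 * Real.log 2 ≤ 2 * Real.log 3 := by
    have := Real.log_le_log (x := (2:ℝ)^3) (y := (3:ℝ)^2) (by norm_num) (by norm_num)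
    rw [Real.log_pow, Real.log_pow] at this
    exact_mod_cast this
  have h6 : Real.log 6 = Real.log 2 + Real.log 3 := by
    rw [← Real.log_mul (by norm_num) (by norm_num)]; norm_num
  have hL : Real.log 6 ≤ Real.log x := Real.log_le_log (by norm_num) hx.le
  have hU : Real.log x ≤ Real.log 6 + (x / 6 - 1) := by
    have := Real.log_le_sub_one_of_pos (x := x / 6) (by positivity)
    rw [Real.log_div hx0.ne' (by norm_num)] at this
    linarith
  obtain ⟨u, hu⟩ : ∃ u, u = Real.log x / x := ⟨_, rfl⟩
  have hux : Real.log x = x * u := by rw [hu]; field_simp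
  have hu0 : 0 ≤ u := by rw [hu]; exact div_nonneg (by linarith) hx0.le
  have hu1 : u ≤ 0.31 := by
    rw [hu, div_le_iff₀ hx0]; linarith
  have he : Real.exp u ≤ 1 + u + u^2/2 + u^3 * (2/9) := by
    have := Real.exp_bound' hu0 (by linarith) (n := 3) (by norm_num)
    norm_num [Finset.sum_range_succ, Nat.factorial] at this
    linarith
  have hsq : u^2 ≤ 0.31 * u := by nlinarith
  have hcu : u^3 ≤ 0.0961 * u := by nlinarith
  have hs : 2 * Real.exp u ≤ u + Real.log 2 + Real.log x := by
    linarith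
  have hs0 : 0 < u + Real.log 2 + Real.log x := by linarith
  have hlog : Real.log 2 + u ≤ Real.log (u + Real.log 2 + Real.log x) := by
    have := Real.log_le_log (by positivity) hs
    rwa [Real.log_mul (by norm_num) (Real.exp_pos u).ne', Real.log_exp] at this
  have hm : Real.log x + x * Real.log (2 * x) = x * (u + Real.log 2 + Real.log x) := by
    rw [Real.log_mul (by norm_num) hx0.ne']
    linear_combination hux
  rw [hm, Real.log_mul hx0.ne' hs0.ne']
  apply mul_le_mul_of_nonneg_left _ hx0.le
  linarith
end
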